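/- arXiv:2501.16104 — 8 statements merged into one kernel-verified Lean document; each statement's English description precedes it below -/
import Mathlib

section
/- Let K be a field, V a vector space over K, and x ∈ V with x ≠ 0. For every element Φ of the degree-2 component ⋀²V of the exterior algebra of V, one has ι(x) ∧ Φ = 0 if and only if there exists y ∈ V such that Φ = ι(x) ∧ ι(y). -/
/-!
Let `x` be an isotropic vector of a Clifford algebra and `d` a linear form with `d x = 1`. The
antiderivation property of the contraction `d⌋` reads `Φ = d⌋(ι x * Φ) + ι x * (d⌋Φ)`, so
`ι x * Φ = 0` forces `Φ = ι x * (d⌋Φ)`, where `d⌋Φ` has degree one less than `Φ`. Conversely,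
`ι x * ι x = Q x = 0`. The exterior algebra is the case `Q = 0`.
-/

open CliffordAlgebra

section CliffordAlgebra

variable {R M : Type*} [CommRing R] [AddCommGroup M] [Module R M] {Q : QuadraticForm R M}

theorem contractLeft_mem_range_ι_pow (d : Module.Dual R M) {n : ℕ} {Φ : CliffordAlgebra Q}
    (hΦ : Φ ∈ LinearMap.range (ι Q) ^ (n + 1)) :
    contractLeft d Φ ∈ LinearMap.range (ι Q) ^ n := by
  induction n generalizing Φ with
  | zero =>
    rw [zero_add, pow_one] at hΦ
    obtain ⟨a, rfl⟩ := hΦ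
    rw [contractLeft_ι, pow_zero]
    exact Submodule.algebraMap_mem (d a)
  | succ n ih =>
    rw [pow_succ'] at hΦ
    induction hΦ using Submodule.mul_induction_on' with
    | mem_mul_mem _ ha Ψ hΨ =>
      obtain ⟨a, rfl⟩ := ha
      have ι_mul_mem : ι Q a * contractLeft d Ψ ∈ LinearMap.range (ι Q) ^ (n + 1) := by
        rw [pow_succ']
        exact Submodule.mul_mem_mul (LinearMap.mem_range_self _ a) (ih hΨ)
      rw [contractLeft_ι_mul]
      exact sub_mem (Submodule.smul_mem _ _ hΨ) ι_mul_mem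
    | add Ψ₁ _ Ψ₂ _ h₁ h₂ =>
      rw [map_add]
      exact add_mem h₁ h₂

theorem smul_eq_ι_mul_contractLeft_of_ι_mul_eq_zero (d : Module.Dual R M) {x : M}
    {Φ : CliffordAlgebra Q} (h : ι Q x * Φ = 0) : d x • Φ = ι Q x * contractLeft d Φ := by
  rw [← sub_eq_zero, ← contractLeft_ι_mul, h, map_zero]

theorem stmt_0_general {d : Module.Dual R M} {x : M} (hd : d x = 1) (hx : Q x = 0) {n : ℕ}
    {Φ : CliffordAlgebra Q} (hΦ : Φ ∈ LinearMap.range (ι Q) ^ (n + 1)) :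
    ι Q x * Φ = 0 ↔ ∃ Ψ ∈ LinearMap.range (ι Q) ^ n, Φ = ι Q x * Ψ := by
  constructor
  · intro h
    refine ⟨contractLeft d Φ, contractLeft_mem_range_ι_pow d hΦ, ?_⟩
    rw [← smul_eq_ι_mul_contractLeft_of_ι_mul_eq_zero d h, hd, one_smul]
  · rintro ⟨Ψ, -, rfl⟩
    rw [← mul_assoc, ι_sq_scalar, hx, map_zero, zero_mul]

end CliffordAlgebra

/-- If `x ≠ 0` and `Φ` lies in the degree-2 component of the exterior algebra of `V`,
then `ι x * Φ = 0` iff `Φ = ι x * ι y` for some `y`. -/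
theorem stmt_0 (K V : Type*) [Field K] [AddCommGroup V] [Module K V]
    (x : V) (hx : x ≠ 0) (Φ : ExteriorAlgebra K V)
    (hΦ : Φ ∈ (LinearMap.range (ExteriorAlgebra.ι K : V →ₗ[K] ExteriorAlgebra K V)) ^ 2) :
    ExteriorAlgebra.ι K x * Φ = 0 ↔
      ∃ y : V, Φ = ExteriorAlgebra.ι K x * ExteriorAlgebra.ι K y := by
  obtain ⟨d, hd⟩ := Module.Projective.exists_dual_eq_one K hx
  simpa using stmt_0_general hd rfl (n := 1) hΦ
end

section
/- Let K be a field, V a vector space over K, and x₁, x₂, y₁, y₂ ∈ V with ι(x₁) ∧ ι(x₂) ≠ 0 in the exterior algebra of V. Then ι(x₁) ∧ ι(x₂) = ι(y₁) ∧ ι(y₂) if and only if there exist scalars α, β, γ, δ ∈ K with αδ − βγ = 1 such that y₁ = α·x₁ + β·x₂ and y₂ = γ·x₁ + δ·x₂ (i.e. the two pairs are 'specially related'). -/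
/-!
If `d`, `e` are linear forms dual to `x₁`, `x₂`, then contracting `x₁ ∧ x₂ = y₁ ∧ y₂` with `d` and
with `e` expresses `x₂` and `x₁` as combinations of `y₁` and `y₂`, and contracting with both gives
`d y₁ * e y₂ - d y₂ * e y₁ = 1`. Cramer's rule inverts these relations: `d` and `e` are the
coordinates of `y₁` and `y₂` in terms of `x₁` and `x₂`.
-/

section CommRing

open ExteriorAlgebra

variable {R M : Type*} [CommRing R] [AddCommGroup M] [Module R M]

theorem ι_smul_add_smul_mul_ι_smul_add_smul (x₁ x₂ : M) (α β γ δ : R) :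
    ι R (α • x₁ + β • x₂) * ι R (γ • x₁ + δ • x₂) = (α * δ - β * γ) • (ι R x₁ * ι R x₂) := by
  have hswap : ι R x₂ * ι R x₁ = -(ι R x₁ * ι R x₂) :=
    eq_neg_of_add_eq_zero_left (ι_add_mul_swap x₂ x₁)
  simp only [map_add, map_smul, add_mul, mul_add, smul_mul_smul_comm, ι_sq_zero, hswap]
  module

theorem contractLeft_ι_mul_ι (d : Module.Dual R M) (a b : M) :
    CliffordAlgebra.contractLeft (Q := (0 : QuadraticForm R M)) d (ι R a * ι R b) =
      ι R (d a • b - d b • a) := by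
  rw [ι, CliffordAlgebra.contractLeft_ι_mul, CliffordAlgebra.contractLeft_ι,
    ← Algebra.commutes, ← Algebra.smul_def, map_sub, map_smul, map_smul]

variable {x₁ x₂ y₁ y₂ : M}

theorem dual_smul_sub_dual_smul_eq_of_ι_mul_ι_eq (h : ι R x₁ * ι R x₂ = ι R y₁ * ι R y₂)
    (d : Module.Dual R M) : d x₁ • x₂ - d x₂ • x₁ = d y₁ • y₂ - d y₂ • y₁ := by
  rw [← ι_inj R, ← contractLeft_ι_mul_ι, ← contractLeft_ι_mul_ι, h]

theorem dual_mul_sub_dual_mul_eq_of_ι_mul_ι_eq (h : ι R x₁ * ι R x₂ = ι R y₁ * ι R y₂)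
    (d e : Module.Dual R M) : d x₁ * e x₂ - d x₂ * e x₁ = d y₁ * e y₂ - d y₂ * e y₁ := by
  simpa only [map_sub, map_smul, smul_eq_mul] using
    congrArg e (dual_smul_sub_dual_smul_eq_of_ι_mul_ι_eq h d)

theorem stmt_1_general {d e : Module.Dual R M}
    (hd₁ : d x₁ = 1) (hd₂ : d x₂ = 0) (he₁ : e x₁ = 0) (he₂ : e x₂ = 1) :
    ι R x₁ * ι R x₂ = ι R y₁ * ι R y₂ ↔
      ∃ α β γ δ : R, α * δ - β * γ = 1 ∧ y₁ = α • x₁ + β • x₂ ∧ y₂ = γ • x₁ + δ • x₂ := by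
  constructor
  · intro h
    have hx₂ : x₂ = d y₁ • y₂ - d y₂ • y₁ := by
      simpa [hd₁, hd₂] using dual_smul_sub_dual_smul_eq_of_ι_mul_ι_eq h d
    have hx₁ : x₁ = e y₂ • y₁ - e y₁ • y₂ := by
      simpa [he₁, he₂, neg_eq_iff_eq_neg] using dual_smul_sub_dual_smul_eq_of_ι_mul_ι_eq h e
    have hdet : d y₁ * e y₂ - e y₁ * d y₂ = 1 := by
      simpa [hd₁, hd₂, he₂, mul_comm (d y₂)] using
        (dual_mul_sub_dual_mul_eq_of_ι_mul_ι_eq h d e).symm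
    refine ⟨d y₁, e y₁, d y₂, e y₂, hdet, ?_, ?_⟩
    · calc
        y₁ = (d y₁ * e y₂ - e y₁ * d y₂) • y₁ := by rw [hdet, one_smul]
        _ = d y₁ • (e y₂ • y₁ - e y₁ • y₂) + e y₁ • (d y₁ • y₂ - d y₂ • y₁) := by module
        _ = d y₁ • x₁ + e y₁ • x₂ := by rw [← hx₁, ← hx₂]
    · calc
        y₂ = (d y₁ * e y₂ - e y₁ * d y₂) • y₂ := by rw [hdet, one_smul]
        _ = d y₂ • (e y₂ • y₁ - e y₁ • y₂) + e y₂ • (d y₁ • y₂ - d y₂ • y₁) := by module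
        _ = d y₂ • x₁ + e y₂ • x₂ := by rw [← hx₁, ← hx₂]
  · rintro ⟨α, β, γ, δ, hdet, rfl, rfl⟩
    rw [ι_smul_add_smul_mul_ι_smul_add_smul, hdet, one_smul]

end CommRing

theorem exists_dual_family_of_linearIndependent {ι K V : Type*} [DivisionRing K] [AddCommGroup V]
    [Module K V] {v : ι → V} (hv : LinearIndependent K v) :
    ∃ d : ι → Module.Dual K V, ∀ i j, d i (v j) = Finsupp.single j 1 i := by
  obtain ⟨g, hg⟩ := (Finsupp.linearCombination K v).exists_leftInverse_of_injective
    (LinearMap.ker_eq_bot.mpr hv)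
  refine ⟨fun i ↦ Finsupp.lapply i ∘ₗ g, fun i j ↦ ?_⟩
  simpa using DFunLike.congr_fun (LinearMap.congr_fun hg (Finsupp.single j 1)) i

theorem exists_dual_pair_of_ι_mul_ι_ne_zero {K V : Type*} [Field K] [AddCommGroup V] [Module K V]
    {x₁ x₂ : V} (h : ExteriorAlgebra.ι K x₁ * ExteriorAlgebra.ι K x₂ ≠ 0) :
    ∃ d e : Module.Dual K V, d x₁ = 1 ∧ d x₂ = 0 ∧ e x₁ = 0 ∧ e x₂ = 1 := by
  have hx : LinearIndependent K ![x₁, x₂] := by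
    contrapose! h
    simpa [ExteriorAlgebra.ιMulti_apply] using
      (ExteriorAlgebra.ιMulti K 2).map_linearDependent _ h
  obtain ⟨d, hd⟩ := exists_dual_family_of_linearIndependent hx
  exact ⟨d 0, d 1, by simpa using hd 0 0, by simpa using hd 0 1, by simpa using hd 1 0,
    by simpa using hd 1 1⟩

/-- Two pairs of vectors have equal (nonzero) wedge products iff they are specially related. -/
theorem stmt_1 (K V : Type*) [Field K] [AddCommGroup V] [Module K V]
    (x₁ x₂ y₁ y₂ : V)
    (h : ExteriorAlgebra.ι K x₁ * ExteriorAlgebra.ι K x₂ ≠ 0) :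
    ExteriorAlgebra.ι K x₁ * ExteriorAlgebra.ι K x₂ =
        ExteriorAlgebra.ι K y₁ * ExteriorAlgebra.ι K y₂ ↔
      ∃ α β γ δ : K, α * δ - β * γ = 1 ∧
        y₁ = α • x₁ + β • x₂ ∧ y₂ = γ • x₁ + δ • x₂ := by
  obtain ⟨d, e, hd₁, hd₂, he₁, he₂⟩ := exists_dual_pair_of_ι_mul_ι_ne_zero h
  exact stmt_1_general hd₁ hd₂ he₁ he₂
end

section
/- Let E be a finite-dimensional real normed vector space and s ⊆ E an open set. Let V, Z : E → E be vector fields differentiable on s, and let λ, σ, ρ, κ, γ, δ : E → ℝ be functions differentiable on s with λ(p)·κ(p) − σ(p)·ρ(p) = 1 for all p ∈ s. Define the vector fields X = λ•V + σ•Z and Y = ρ•V + κ•Z (pointwise scalar multiplication and addition). If [V,Z](p) = γ(p)•V(p) + δ(p)•Z(p) for all p ∈ s, then there exist functions α, β : E → ℝ such that [X,Y](p) = α(p)•X(p) + β(p)•Y(p) for all p ∈ s. (Integrability of a simple bivector of vector fields is independent of the chosen representation.) -/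
open VectorField

/-! Modulo the span `P` of `V p` and `Z p`, the derivative terms in the Leibniz rule vanish, so
`[X, Y](p)` lies in `P` as soon as `[V, Z](p)` does. The change of frame from `(V, Z)` to `(X, Y)`
is invertible, so `P` is also the span of `X p` and `Y p`. -/

theorem span_pair_smul_add_smul_eq_of_isUnit_det {R M : Type*} [CommRing R] [AddCommGroup M]
    [Module R M] {a b c d : R} (hdet : IsUnit (a * d - b * c)) (v w : M) :
    Submodule.span R {a • v + b • w, c • v + d • w} = Submodule.span R {v, w} := by
  obtain ⟨e, he⟩ := hdet.exists_left_inv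
  apply le_antisymm <;>
    simp only [Submodule.span_le, Set.pair_subset_iff, SetLike.mem_coe, Submodule.mem_span_pair]
  · exact ⟨⟨a, b, rfl⟩, ⟨c, d, rfl⟩⟩
  · have cramer_left : (e * d) • (a • v + b • w) + (-(e * b)) • (c • v + d • w) = v :=
      calc
        _ = (e * (a * d - b * c)) • v := by module
        _ = v := by rw [he, one_smul]
    have cramer_right : (-(e * c)) • (a • v + b • w) + (e * a) • (c • v + d • w) = w :=
      calc
        _ = (e * (a * d - b * c)) • w := by module
        _ = w := by rw [he, one_smul]
    exact ⟨⟨_, _, cramer_left⟩, ⟨_, _, cramer_right⟩⟩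

section LieBracketWithin

variable {𝕜 E : Type*} [NontriviallyNormedField 𝕜] [NormedAddCommGroup E] [NormedSpace 𝕜 E]
  {s : Set E} {x : E} {P : Submodule 𝕜 E} {U V W : E → E} {f g : E → 𝕜}

theorem lieBracketWithin_smul_right_mem (hs : UniqueDiffWithinAt 𝕜 s x)
    (hf : DifferentiableWithinAt 𝕜 f s x) (hV : DifferentiableWithinAt 𝕜 V s x)
    (hVP : V x ∈ P) (hUV : lieBracketWithin 𝕜 U V s x ∈ P) :
    lieBracketWithin 𝕜 U (fun y => f y • V y) s x ∈ P := by
  rw [lieBracketWithin_smul_right hf hV hs]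
  exact P.add_mem (P.smul_mem _ hVP) (P.smul_mem _ hUV)

theorem lieBracketWithin_smul_add_smul_right_mem (hs : UniqueDiffWithinAt 𝕜 s x)
    (hf : DifferentiableWithinAt 𝕜 f s x) (hg : DifferentiableWithinAt 𝕜 g s x)
    (hV : DifferentiableWithinAt 𝕜 V s x) (hW : DifferentiableWithinAt 𝕜 W s x)
    (hVP : V x ∈ P) (hWP : W x ∈ P)
    (hUV : lieBracketWithin 𝕜 U V s x ∈ P) (hUW : lieBracketWithin 𝕜 U W s x ∈ P) :
    lieBracketWithin 𝕜 U (fun y => f y • V y + g y • W y) s x ∈ P := by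
  change lieBracketWithin 𝕜 U ((fun y => f y • V y) + fun y => g y • W y) s x ∈ P
  rw [lieBracketWithin_add_right (hf.fun_smul hV) (hg.fun_smul hW) hs]
  exact P.add_mem (lieBracketWithin_smul_right_mem hs hf hV hVP hUV)
    (lieBracketWithin_smul_right_mem hs hg hW hWP hUW)

theorem lieBracketWithin_mem_comm :
    lieBracketWithin 𝕜 V W s x ∈ P ↔ lieBracketWithin 𝕜 W V s x ∈ P := by
  rw [lieBracketWithin_swap, Pi.neg_apply, P.neg_mem_iff]

theorem lieBracketWithin_smul_add_smul_mem {a b c d : E → 𝕜} (hs : UniqueDiffWithinAt 𝕜 s x)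
    (hV : DifferentiableWithinAt 𝕜 V s x) (hW : DifferentiableWithinAt 𝕜 W s x)
    (ha : DifferentiableWithinAt 𝕜 a s x) (hb : DifferentiableWithinAt 𝕜 b s x)
    (hc : DifferentiableWithinAt 𝕜 c s x) (hd : DifferentiableWithinAt 𝕜 d s x)
    (hVP : V x ∈ P) (hWP : W x ∈ P) (hVW : lieBracketWithin 𝕜 V W s x ∈ P) :
    lieBracketWithin 𝕜 (fun y => a y • V y + b y • W y) (fun y => c y • V y + d y • W y) s x
      ∈ P := by
  have bracket_frame_mem {U : E → E} (hUV : lieBracketWithin 𝕜 U V s x ∈ P)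
      (hUW : lieBracketWithin 𝕜 U W s x ∈ P) {f g : E → 𝕜}
      (hf : DifferentiableWithinAt 𝕜 f s x) (hg : DifferentiableWithinAt 𝕜 g s x) :=
    lieBracketWithin_smul_add_smul_right_mem hs hf hg hV hW hVP hWP hUV hUW
  have hVY := bracket_frame_mem (U := V) (by simp) hVW hc hd
  have hWY := bracket_frame_mem (U := W) (lieBracketWithin_mem_comm.mp hVW) (by simp) hc hd
  exact lieBracketWithin_mem_comm.mp <|
    bracket_frame_mem (lieBracketWithin_mem_comm.mp hVY) (lieBracketWithin_mem_comm.mp hWY) ha hb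

theorem stmt_2_general (hs : UniqueDiffOn 𝕜 s) (V Z : E → E) (hV : DifferentiableOn 𝕜 V s)
    (hZ : DifferentiableOn 𝕜 Z s) (l σ ρ κ γ δ : E → 𝕜)
    (hl : DifferentiableOn 𝕜 l s) (hσ : DifferentiableOn 𝕜 σ s)
    (hρ : DifferentiableOn 𝕜 ρ s) (hκ : DifferentiableOn 𝕜 κ s)
    (hdet : ∀ p ∈ s, l p * κ p - σ p * ρ p ≠ 0)
    (X Y : E → E)
    (hX : X = fun p => l p • V p + σ p • Z p)
    (hY : Y = fun p => ρ p • V p + κ p • Z p)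
    (hVZ : ∀ p ∈ s, lieBracketWithin 𝕜 V Z s p = γ p • V p + δ p • Z p) :
    ∃ α β : E → 𝕜, ∀ p ∈ s, lieBracketWithin 𝕜 X Y s p = α p • X p + β p • Y p := by
  have bracket_mem_span (p : E) (hp : p ∈ s) :
      lieBracketWithin 𝕜 X Y s p ∈ Submodule.span 𝕜 {X p, Y p} := by
    have span_frame : Submodule.span 𝕜 {X p, Y p} = Submodule.span 𝕜 {V p, Z p} := by
      rw [hX, hY]
      exact span_pair_smul_add_smul_eq_of_isUnit_det (hdet p hp).isUnit (V p) (Z p)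
    rw [span_frame, hX, hY]
    exact lieBracketWithin_smul_add_smul_mem (hs p hp) (hV p hp) (hZ p hp) (hl p hp) (hσ p hp)
      (hρ p hp) (hκ p hp) (Submodule.mem_span_of_mem (Set.mem_insert _ _))
      (Submodule.mem_span_of_mem (Set.mem_insert_of_mem _ rfl))
      (Submodule.mem_span_pair.mpr ⟨γ p, δ p, (hVZ p hp).symm⟩)
  simp only [Submodule.mem_span_pair] at bracket_mem_span
  choose! α β bracket_eq using bracket_mem_span
  exact ⟨α, β, fun p hp => (bracket_eq p hp).symm⟩

end LieBracketWithin

/-- Integrability of a simple bivector of vector fields is independent of the chosen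
representation: if `[V,Z]` is pointwise a combination of `V` and `Z` on an open set `s`,
and `X = l•V + σ•Z`, `Y = ρ•V + κ•Z` with `l·κ − σ·ρ = 1` on `s`, then `[X,Y]` is
pointwise a combination of `X` and `Y` on `s`. -/
theorem stmt_2 (E : Type*) [NormedAddCommGroup E] [NormedSpace ℝ E] [FiniteDimensional ℝ E]
    (s : Set E) (hs : IsOpen s)
    (V Z : E → E) (hV : DifferentiableOn ℝ V s) (hZ : DifferentiableOn ℝ Z s)
    (l σ ρ κ γ δ : E → ℝ)
    (hl : DifferentiableOn ℝ l s) (hσ : DifferentiableOn ℝ σ s)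
    (hρ : DifferentiableOn ℝ ρ s) (hκ : DifferentiableOn ℝ κ s)
    (hγ : DifferentiableOn ℝ γ s) (hδ : DifferentiableOn ℝ δ s)
    (hdet : ∀ p ∈ s, l p * κ p - σ p * ρ p = 1)
    (X Y : E → E)
    (hX : X = fun p => l p • V p + σ p • Z p)
    (hY : Y = fun p => ρ p • V p + κ p • Z p)
    (hVZ : ∀ p ∈ s, lieBracket ℝ V Z p = γ p • V p + δ p • Z p) :
    ∃ α β : E → ℝ, ∀ p ∈ s, lieBracket ℝ X Y p = α p • X p + β p • Y p := by
  simp +contextual only [← lieBracketWithin_of_isOpen hs] at hVZ ⊢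
  exact stmt_2_general hs.uniqueDiffOn V Z hV hZ l σ ρ κ γ δ hl hσ hρ hκ
    (fun p hp => (hdet p hp).trans_ne one_ne_zero) X Y hX hY hVZ
end

section
/- Fix n ≥ 1 and let P = ℝⁿ × ℝⁿ. Let U ⊆ P be an open set such that every (x,v) ∈ U has v ≠ 0 and satisfies (x, λv) ∈ U for all λ > 0. Let φ : P → ℝⁿ be differentiable on U, and define the horizontal vector field W(x,v) = (v, φ(x,v)) and the radial vector field R(x,v) = (0,v). Then the Lie bracket satisfies [R,W](p) = W(p) for every p ∈ U if and only if φ is radially quadratic on U, i.e. φ(x, λv) = λ²·φ(x,v) for all (x,v) ∈ U and all λ > 0. -/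
open VectorField

/-!
Since `R` and `W` have derivatives `(0, dv)` and `(dv, dφ)`, one finds `[R, W] = (v, Rφ - φ)`, so
`[R, W] = W` says `Rφ = 2 φ`. By Euler's theorem this is homogeneity of degree two: along a ray,
`f t = φ (x, t v)` satisfies `t f' = 2 f`, whose solutions on `t > 0` are `f t = t ^ 2 f 1`.
-/

open Set

/-- The radial field `R(x, v) = (0, v)`, which generates the dilations `(x, v) ↦ (x, l v)` of the
second factor. -/
def radialField {E F : Type*} [Zero E] (p : E × F) : E × F := (0, p.2)

/-- The horizontal field `W(x, v) = (v, φ(x, v))` with vertical part `φ`; its integral curves are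
the solutions of the second-order equation `x'' = φ(x, x')`. -/
def horizontalField {E : Type*} (φ : E × E → E) (p : E × E) : E × E := (p.2, φ p)

section EulerHomogeneity

variable {E F G : Type*} [NormedAddCommGroup E] [NormedSpace ℝ E]
  [NormedAddCommGroup F] [NormedSpace ℝ F] [NormedAddCommGroup G] [NormedSpace ℝ G]

theorem smul_deriv_eq_smul_of_eq_rpow_smul {a : ℝ} {f : ℝ → G}
    (hf : ∀ t : ℝ, 0 < t → f t = t ^ a • f 1) {t : ℝ} (ht : 0 < t) :
    t • deriv f t = a • f t := by
  have hpow : HasDerivAt (fun s : ℝ => s ^ a • f 1) ((a * t ^ (a - 1)) • f 1) t :=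
    (Real.hasDerivAt_rpow_const (Or.inl ht.ne')).smul_const (f 1)
  have hderiv : HasDerivAt f ((a * t ^ (a - 1)) • f 1) t :=
    hpow.congr_of_eventuallyEq ((lt_mem_nhds ht).mono hf)
  rw [hderiv.deriv, hf t ht, smul_smul, smul_smul, mul_left_comm, Real.rpow_sub_one ht.ne',
    mul_div_cancel₀ _ ht.ne']

theorem eq_rpow_smul_of_smul_deriv_eq_smul {a : ℝ} {f : ℝ → G}
    (hf : DifferentiableOn ℝ f (Ioi 0))
    (hode : ∀ t : ℝ, 0 < t → t • deriv f t = a • f t) {t : ℝ} (ht : 0 < t) :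
    f t = t ^ a • f 1 := by
  have hderiv : ∀ s ∈ Ioi (0 : ℝ), HasDerivAt (fun r : ℝ => r ^ (-a) • f r) 0 s := by
    intro s (hs : 0 < s)
    have hprod := (Real.hasDerivAt_rpow_const (p := -a) (Or.inl hs.ne')).fun_smul
      (hf.differentiableAt (Ioi_mem_nhds hs)).hasDerivAt
    have hzero : s ^ (-a) • deriv f s + (-a * s ^ (-a - 1)) • f s = 0 := calc
      _ = s ^ (-a - 1) • (s • deriv f s - a • f s) := by
        rw [Real.rpow_sub_one hs.ne']
        match_scalars <;> field_simp
      _ = 0 := by rw [hode s hs, sub_self, smul_zero]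
    rwa [hzero] at hprod
  have hconst : t ^ (-a) • f t = (1 : ℝ) ^ (-a) • f 1 :=
    isOpen_Ioi.is_const_of_deriv_eq_zero isPreconnected_Ioi
      (fun s hs => (hderiv s hs).differentiableAt.differentiableWithinAt)
      (fun s hs => (hderiv s hs).deriv) (mem_Ioi.2 ht) (mem_Ioi.2 one_pos)
  rwa [Real.one_rpow, one_smul, Real.rpow_neg ht.le,
    inv_smul_eq_iff₀ (Real.rpow_pos_of_pos ht a).ne'] at hconst

theorem hasDerivAt_comp_ray {φ : E × F → G} {p : E × F} {t : ℝ}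
    (hφ : DifferentiableAt ℝ φ (p.1, t • p.2)) :
    HasDerivAt (fun s : ℝ => φ (p.1, s • p.2))
      (fderiv ℝ φ (p.1, t • p.2) (radialField p)) t := by
  have hray : HasDerivAt (fun s : ℝ => (p.1, s • p.2)) (radialField p) t := by
    simpa [radialField] using (hasDerivAt_const t p.1).prodMk ((hasDerivAt_id t).smul_const p.2)
  exact hφ.hasFDerivAt.comp_hasDerivAt t hray

theorem smul_deriv_comp_ray {φ : E × F → G} {p : E × F} {t : ℝ}
    (hφ : DifferentiableAt ℝ φ (p.1, t • p.2)) :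
    t • deriv (fun s : ℝ => φ (p.1, s • p.2)) t =
      fderiv ℝ φ (p.1, t • p.2) (radialField (p.1, t • p.2)) := by
  rw [(hasDerivAt_comp_ray hφ).deriv, ← map_smul]
  simp [radialField]

theorem fderiv_radialField_eq_smul_iff {U : Set (E × F)} (hU : IsOpen U)
    (hUcone : ∀ p ∈ U, ∀ l : ℝ, 0 < l → (p.1, l • p.2) ∈ U)
    {φ : E × F → G} (hφ : DifferentiableOn ℝ φ U) (a : ℝ) :
    (∀ p ∈ U, fderiv ℝ φ p (radialField p) = a • φ p) ↔
      ∀ p ∈ U, ∀ l : ℝ, 0 < l → φ (p.1, l • p.2) = l ^ a • φ p := by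
  have hdiff : ∀ p ∈ U, ∀ t : ℝ, 0 < t → DifferentiableAt ℝ φ (p.1, t • p.2) :=
    fun p hp t ht => hφ.differentiableAt (hU.mem_nhds (hUcone p hp t ht))
  constructor
  · intro hEuler p hp l hl
    have hray : DifferentiableOn ℝ (fun t : ℝ => φ (p.1, t • p.2)) (Ioi 0) := fun t ht =>
      (hasDerivAt_comp_ray (hdiff p hp t ht)).differentiableAt.differentiableWithinAt
    simpa only [one_smul] using eq_rpow_smul_of_smul_deriv_eq_smul hray
      (fun t ht => (smul_deriv_comp_ray (hdiff p hp t ht)).trans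
        (hEuler _ (hUcone p hp t ht))) hl
  · intro hhom p hp
    have hone := smul_deriv_eq_smul_of_eq_rpow_smul (f := fun t : ℝ => φ (p.1, t • p.2))
      (fun t ht => by simpa only [one_smul] using hhom p hp t ht) one_pos
    rw [smul_deriv_comp_ray (hdiff p hp 1 one_pos)] at hone
    simpa only [one_smul] using hone

end EulerHomogeneity

section HorizontalField

variable {E : Type*} [NormedAddCommGroup E] [NormedSpace ℝ E]

theorem lieBracket_radialField_horizontalField {φ : E × E → E} {p : E × E}
    (hφ : DifferentiableAt ℝ φ p) :
    lieBracket ℝ radialField (horizontalField φ) p =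
      (p.2, fderiv ℝ φ p (radialField p) - φ p) := by
  have hR : HasFDerivAt (radialField : E × E → E × E)
      ((0 : E × E →L[ℝ] E).prod (ContinuousLinearMap.snd ℝ E E)) p :=
    (hasFDerivAt_const (0 : E) p).prodMk hasFDerivAt_snd
  have hW : HasFDerivAt (horizontalField φ)
      ((ContinuousLinearMap.snd ℝ E E).prod (fderiv ℝ φ p)) p :=
    hasFDerivAt_snd.prodMk hφ.hasFDerivAt
  rw [lieBracket, hW.fderiv, hR.fderiv]
  simp [radialField, horizontalField]

theorem lieBracket_radialField_horizontalField_eq_self_iff {φ : E × E → E} {p : E × E}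
    (hφ : DifferentiableAt ℝ φ p) :
    lieBracket ℝ radialField (horizontalField φ) p = horizontalField φ p ↔
      fderiv ℝ φ p (radialField p) = (2 : ℝ) • φ p := by
  rw [lieBracket_radialField_horizontalField hφ, horizontalField, Prod.mk_right_inj,
    sub_eq_iff_eq_add, two_smul]

theorem stmt_3_general {U : Set (E × E)} (hU : IsOpen U)
    (hUcone : ∀ p ∈ U, ∀ l : ℝ, 0 < l → (p.1, l • p.2) ∈ U)
    {φ : E × E → E} (hφ : DifferentiableOn ℝ φ U) :
    (∀ p ∈ U, lieBracket ℝ radialField (horizontalField φ) p = horizontalField φ p) ↔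
      ∀ p ∈ U, ∀ l : ℝ, 0 < l → φ (p.1, l • p.2) = l ^ 2 • φ p := by
  have hbracket : ∀ p ∈ U,
      (lieBracket ℝ radialField (horizontalField φ) p = horizontalField φ p ↔
        fderiv ℝ φ p (radialField p) = (2 : ℝ) • φ p) := fun p hp =>
    lieBracket_radialField_horizontalField_eq_self_iff (hφ.differentiableAt (hU.mem_nhds hp))
  rw [forall₂_congr hbracket, fderiv_radialField_eq_smul_iff hU hUcone hφ]
  simp only [Real.rpow_two]

end HorizontalField

/-- A horizontal field `W(x,v) = (v, φ(x,v))` satisfies `[R,W] = W` on `U`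
(with `R(x,v) = (0,v)` the radial field) iff `φ` is radially quadratic on `U`. -/
theorem stmt_3 (n : ℕ) (hn : 1 ≤ n)
    (U : Set ((Fin n → ℝ) × (Fin n → ℝ))) (hU : IsOpen U)
    (hU0 : ∀ p ∈ U, p.2 ≠ 0)
    (hUcone : ∀ p ∈ U, ∀ l : ℝ, 0 < l → (p.1, l • p.2) ∈ U)
    (φ : (Fin n → ℝ) × (Fin n → ℝ) → (Fin n → ℝ))
    (hφ : DifferentiableOn ℝ φ U)
    (W R : (Fin n → ℝ) × (Fin n → ℝ) → (Fin n → ℝ) × (Fin n → ℝ))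
    (hW : W = fun p => (p.2, φ p))
    (hR : R = fun p => (0, p.2)) :
    (∀ p ∈ U, lieBracket ℝ R W p = W p) ↔
      (∀ p ∈ U, ∀ l : ℝ, 0 < l → φ (p.1, l • p.2) = l ^ 2 • φ p) := by
  subst hW hR
  exact stmt_3_general hU hUcone hφ
end

section
/- Fix n ≥ 1 and let P = ℝⁿ × ℝⁿ. Let U ⊆ P be an open set such that every (x,v) ∈ U has v ≠ 0 and satisfies (x, λv) ∈ U for all λ > 0. Let φ : P → ℝⁿ satisfy φ(x,λv) = λ²·φ(x,v) on U for λ > 0, let k be a nonzero integer, and let F̂ : P → ℝ be differentiable on U, nowhere zero on U, with F̂(x,λv) = λᵏ·F̂(x,v) for all (x,v) ∈ U and λ > 0. Define (WF̂)(x,v) = DF̂(x,v)[(v, φ(x,v))] and φ̂(x,v) = φ(x,v) − ((WF̂)(x,v)/(k·F̂(x,v)))·v. Then: (a) φ̂(x,λv) = λ²·φ̂(x,v) for all (x,v) ∈ U and λ > 0; and (b) DF̂(x,v)[(v, φ̂(x,v))] = 0 for all (x,v) ∈ U. (The transformed field Ŵ(x,v) = (v, φ̂(x,v)) is again a Vlasov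 field and is compatible with the kinematic indicator F̂; this is the transformation formula between kinematic domains.) -/
/-!
Euler's identity says that a fibrewise `k`-homogeneous `F` has derivative `k * F` in the direction
of the radial field `(0, v)`. Subtracting `c • (0, v)` from `(v, φ)` therefore lowers `WF` by
`c * k * F`, and `c = WF / (k * F)` is the choice that cancels it. Since `WF` has degree `k + 1`,
this `c` has degree one, so `c • v` has degree two like `φ`.
-/

section FiberHomogeneous

open scoped Topology

variable {E V W : Type*}

/-- A function on `E × V` is homogeneous of degree `d` on `U` in its second variable. Only positive
dilations are considered, so that every real degree makes sense. The dilated point need not lie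
in `U`. -/
def IsFiberHomogeneousOn [SMul ℝ V] [SMul ℝ W] (U : Set (E × V)) (d : ℝ) (f : E × V → W) : Prop :=
  ∀ p ∈ U, ∀ l : ℝ, 0 < l → f (p.1, l • p.2) = l ^ d • f p

variable {U : Set (E × V)} {d e : ℝ}

theorem isFiberHomogeneousOn_two_iff [SMul ℝ V] [SMul ℝ W] {f : E × V → W} :
    IsFiberHomogeneousOn U 2 f ↔
      ∀ p ∈ U, ∀ l : ℝ, 0 < l → f (p.1, l • p.2) = l ^ 2 • f p := by
  simp only [IsFiberHomogeneousOn, Real.rpow_two]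

theorem isFiberHomogeneousOn_intCast_iff [SMul ℝ V] [SMul ℝ W] {k : ℤ} {f : E × V → W} :
    IsFiberHomogeneousOn U k f ↔
      ∀ p ∈ U, ∀ l : ℝ, 0 < l → f (p.1, l • p.2) = l ^ k • f p := by
  simp only [IsFiberHomogeneousOn, Real.rpow_intCast]

theorem isFiberHomogeneousOn_snd [SMul ℝ V] : IsFiberHomogeneousOn U 1 (Prod.snd : E × V → V) :=
  fun p _ l _ => by rw [Real.rpow_one]

namespace IsFiberHomogeneousOn

section Algebra

variable [SMul ℝ V]

theorem sub [AddGroup W] [DistribMulAction ℝ W] {f g : E × V → W} (hf : IsFiberHomogeneousOn U d f)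
    (hg : IsFiberHomogeneousOn U d g) : IsFiberHomogeneousOn U d fun p => f p - g p :=
  fun p hp l hl => by simp only [hf p hp l hl, hg p hp l hl, smul_sub]

theorem smul [MulAction ℝ W] {f : E × V → ℝ} {g : E × V → W} (hf : IsFiberHomogeneousOn U d f)
    (hg : IsFiberHomogeneousOn U e g) : IsFiberHomogeneousOn U (d + e) fun p => f p • g p :=
  fun p hp l hl => by
    simp only [hf p hp l hl, hg p hp l hl, Real.rpow_add hl, smul_eq_mul, smul_smul, mul_right_comm]

theorem const_mul {f : E × V → ℝ} (c : ℝ) (hf : IsFiberHomogeneousOn U d f) :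
    IsFiberHomogeneousOn U d fun p => c * f p :=
  fun p hp l hl => by simp only [hf p hp l hl, smul_eq_mul, mul_left_comm]

theorem div {f g : E × V → ℝ} (hf : IsFiberHomogeneousOn U d f)
    (hg : IsFiberHomogeneousOn U e g) : IsFiberHomogeneousOn U (d - e) fun p => f p / g p :=
  fun p hp l hl => by
    simp only [hf p hp l hl, hg p hp l hl, Real.rpow_sub hl, smul_eq_mul, mul_div_mul_comm]

end Algebra

variable [NormedAddCommGroup E] [NormedSpace ℝ E] [NormedAddCommGroup V] [NormedSpace ℝ V]
  [NormedAddCommGroup W] [NormedSpace ℝ W] {F : E × V → W} {p : E × V}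

theorem fderiv_apply_zero_snd (hF : IsFiberHomogeneousOn U d F) (hp : p ∈ U)
    (hdiff : DifferentiableAt ℝ F p) : fderiv ℝ F p (0, p.2) = d • F p := by
  have hray : HasDerivAt (fun t : ℝ => (p.1, t • p.2)) (0, p.2) 1 := by
    simpa using (hasDerivAt_const (1 : ℝ) p.1).prodMk ((hasDerivAt_id (1 : ℝ)).smul_const p.2)
  have hcomp : HasDerivAt (fun t : ℝ => F (p.1, t • p.2)) (fderiv ℝ F p (0, p.2)) 1 :=
    hdiff.hasFDerivAt.comp_hasDerivAt_of_eq (1 : ℝ) hray (by simp)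
  have hpow : HasDerivAt (fun t : ℝ => t ^ d • F p) (d • F p) 1 := by
    simpa using (Real.hasDerivAt_rpow_const (p := d) (Or.inl one_ne_zero)).smul_const (F p)
  refine hcomp.unique (hpow.congr_of_eventuallyEq ?_)
  filter_upwards [lt_mem_nhds (zero_lt_one' ℝ)] with t ht using hF p hp t ht

theorem fderiv_smul_snd (hF : IsFiberHomogeneousOn U d F) (hU : U ∈ 𝓝 p) {l : ℝ} (hl : 0 < l)
    (a : E) (b : V) : fderiv ℝ F (p.1, l • p.2) (a, l • b) = l ^ d • fderiv ℝ F p (a, b) := by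
  let dilation : (E × V) ≃L[ℝ] E × V :=
    (ContinuousLinearEquiv.refl ℝ E).prodCongr
      (ContinuousLinearEquiv.smulLeft (Units.mk0 l hl.ne'))
  have hcomp : F ∘ dilation =ᶠ[𝓝 p] l ^ d • F := by
    filter_upwards [hU] with q hq using hF q hq l hl
  calc fderiv ℝ F (dilation p) (dilation (a, b))
      = fderiv ℝ (F ∘ dilation) p (a, b) := by rw [dilation.comp_right_fderiv]; rfl
    _ = l ^ d • fderiv ℝ F p (a, b) := by rw [hcomp.fderiv_eq, fderiv_const_smul_field]; rfl

end IsFiberHomogeneousOn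

end FiberHomogeneous

section Vlasov

variable {E : Type*} [NormedAddCommGroup E] [NormedSpace ℝ E] {U : Set (E × E)}
  {F : E × E → ℝ} {φ : E × E → E} {d k : ℝ} {p : E × E}

/-- The derivative `WF` of `F` along the field `W(x, v) = (v, φ(x, v))` with vertical part `φ`. -/
noncomputable def vlasovDeriv (φ : E × E → E) (F : E × E → ℝ) (p : E × E) : ℝ :=
  fderiv ℝ F p (p.2, φ p)

/-- The vertical part `φ̂` of the field obtained from `(v, φ)` by the transformation formula for a
kinematic indicator `F` of degree `k`. -/
noncomputable def kinematicTransform (k : ℝ) (F : E × E → ℝ) (φ : E × E → E) (p : E × E) : E :=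
  φ p - (vlasovDeriv φ F p / (k * F p)) • p.2

theorem IsFiberHomogeneousOn.vlasovDeriv (hU : IsOpen U) (hF : IsFiberHomogeneousOn U d F)
    (hφ : IsFiberHomogeneousOn U 2 φ) : IsFiberHomogeneousOn U (d + 1) (vlasovDeriv φ F) := by
  intro p hp l hl
  have hfield : (l • p.2, φ (p.1, l • p.2)) = l • (p.2, l • φ p) := by
    rw [hφ p hp l hl, Real.rpow_two, Prod.smul_mk, smul_smul, sq]
  calc fderiv ℝ F (p.1, l • p.2) (l • p.2, φ (p.1, l • p.2))
      = l • fderiv ℝ F (p.1, l • p.2) (p.2, l • φ p) := by rw [hfield, map_smul]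
    _ = l • l ^ d • fderiv ℝ F p (p.2, φ p) := by
      rw [hF.fderiv_smul_snd (hU.mem_nhds hp) hl]
    _ = l ^ (d + 1) • fderiv ℝ F p (p.2, φ p) := by
      rw [smul_smul, Real.rpow_add_one hl.ne', mul_comm]

theorem IsFiberHomogeneousOn.kinematicTransform (hU : IsOpen U) (hF : IsFiberHomogeneousOn U k F)
    (hφ : IsFiberHomogeneousOn U 2 φ) : IsFiberHomogeneousOn U 2 (kinematicTransform k F φ) := by
  have hcorrection := ((hF.vlasovDeriv hU hφ).div (hF.const_mul k)).smul isFiberHomogeneousOn_snd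
  rw [show k + 1 - k + 1 = 2 by ring] at hcorrection
  exact hφ.sub hcorrection

theorem vlasovDeriv_sub_smul_snd (hF : IsFiberHomogeneousOn U d F) (hp : p ∈ U)
    (hdiff : DifferentiableAt ℝ F p) (c : E × E → ℝ) :
    vlasovDeriv (fun q => φ q - c q • q.2) F p = vlasovDeriv φ F p - c p * (d * F p) := by
  have hfield : (p.2, φ p - c p • p.2) = (p.2, φ p) - c p • ((0 : E), p.2) := by simp
  simp only [vlasovDeriv, hfield, map_sub, map_smul, hF.fderiv_apply_zero_snd hp hdiff, smul_eq_mul]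

theorem vlasovDeriv_kinematicTransform (hF : IsFiberHomogeneousOn U k F) (hp : p ∈ U)
    (hdiff : DifferentiableAt ℝ F p) (hk : k ≠ 0) (hFp : F p ≠ 0) :
    vlasovDeriv (kinematicTransform k F φ) F p = 0 :=
  (vlasovDeriv_sub_smul_snd hF hp hdiff _).trans <| by
    rw [div_mul_cancel₀ _ (mul_ne_zero hk hFp), sub_self]

theorem stmt_6_general (hU : IsOpen U) (hφ : IsFiberHomogeneousOn U 2 φ) (hk : k ≠ 0)
    (hdiff : DifferentiableOn ℝ F U) (hF0 : ∀ p ∈ U, F p ≠ 0) (hF : IsFiberHomogeneousOn U k F) :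
    IsFiberHomogeneousOn U 2 (kinematicTransform k F φ) ∧
      ∀ p ∈ U, vlasovDeriv (kinematicTransform k F φ) F p = 0 :=
  ⟨hF.kinematicTransform hU hφ, fun p hp =>
    vlasovDeriv_kinematicTransform hF hp (hdiff.differentiableAt (hU.mem_nhds hp)) hk (hF0 p hp)⟩

end Vlasov

/-- The transformation formula between kinematic domains: the transformed vertical part
`φ̂ = φ − (WF̂/(k·F̂))·v` is again radially quadratic and the transformed field is
compatible with the kinematic indicator `F̂`. -/
theorem stmt_6 (n : ℕ) (hn : 1 ≤ n)
    (U : Set ((Fin n → ℝ) × (Fin n → ℝ))) (hU : IsOpen U)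
    (hU0 : ∀ p ∈ U, p.2 ≠ 0)
    (hUcone : ∀ p ∈ U, ∀ l : ℝ, 0 < l → (p.1, l • p.2) ∈ U)
    (φ : (Fin n → ℝ) × (Fin n → ℝ) → (Fin n → ℝ))
    (hφ : ∀ p ∈ U, ∀ l : ℝ, 0 < l → φ (p.1, l • p.2) = l ^ 2 • φ p)
    (k : ℤ) (hk : k ≠ 0)
    (Fh : (Fin n → ℝ) × (Fin n → ℝ) → ℝ)
    (hFh : DifferentiableOn ℝ Fh U)
    (hFh0 : ∀ p ∈ U, Fh p ≠ 0)
    (hFhom : ∀ p ∈ U, ∀ l : ℝ, 0 < l → Fh (p.1, l • p.2) = l ^ k * Fh p)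
    (WFh : (Fin n → ℝ) × (Fin n → ℝ) → ℝ)
    (hWFh : WFh = fun p => fderiv ℝ Fh p (p.2, φ p))
    (φhat : (Fin n → ℝ) × (Fin n → ℝ) → (Fin n → ℝ))
    (hφhat : φhat = fun p => φ p - (WFh p / ((k : ℝ) * Fh p)) • p.2) :
    (∀ p ∈ U, ∀ l : ℝ, 0 < l → φhat (p.1, l • p.2) = l ^ 2 • φhat p) ∧
      (∀ p ∈ U, fderiv ℝ Fh p (p.2, φhat p) = 0) := by
  subst hWFh hφhat
  exact (stmt_6_general hU (isFiberHomogeneousOn_two_iff.2 hφ) (Int.cast_ne_zero.2 hk) hFh hFh0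
    (isFiberHomogeneousOn_intCast_iff.2 hFhom)).imp_left isFiberHomogeneousOn_two_iff.1
end

section
/- Fix n ≥ 1 and let U ⊆ ℝⁿ × (ℝⁿ∖{0}) satisfy (x, λv) ∈ U for all (x,v) ∈ U and λ ≠ 0. Let ψ : U → ℝⁿ and suppose the associated horizontal bivector is radially cubic: for all (x,v) ∈ U, all λ ≠ 0, and all indices i, j, one has (λvᵢ)·ψⱼ(x,λv) − (λvⱼ)·ψᵢ(x,λv) = λ³·(vᵢ·ψⱼ(x,v) − vⱼ·ψᵢ(x,v)). Define w(x,v) = ψ(x,v) − (⟨v, ψ(x,v)⟩/⟨v,v⟩)·v, where ⟨·,·⟩ is the Euclidean inner product. Then for all (x,v) ∈ U: (a) w(x,λv) = λ²·w(x,v) for all λ ≠ 0; (b) vᵢ·wⱼ(x,v) − vⱼ·wᵢ(x,v) = vᵢ·ψⱼ(x,v) − vⱼ·ψᵢ(x,v) for all i, j; and (c) ⟨v, w(x,v)⟩ = 0. (Construction of the coordinate-based Vlasov field W_crd from a radially cubic horizontal bivector: w is radially quadratic, represents the same bivector R∧X, and is compatible with the coordinate kinematic indicator F_crd = ⟨v,v⟩.)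 -/
open scoped BigOperators

/-!
Contracting `v ∧ a` with `v` gives `⟨v,v⟩ a − ⟨v,a⟩ v`, so the part of `a` orthogonal to `v` is
`⟨v,v⟩⁻¹ ι_v(v ∧ a)`: it depends on `a` only through the bivector `v ∧ a`. When the bivector
scales by `l ^ (k + 1)` under `v ↦ l v`, the contraction contributes one more factor `l` and the
normalization a factor `l ^ (-2)`, so the orthogonal part scales by `l ^ k`.
-/

open scoped Matrix

namespace RadialBivector

variable {ι R K : Type*}

/-- The matrix of components of the bivector `v ∧ a`. For the radial field `R(x, v) = (0, v)` and
a horizontal field `X(x, v) = (v, ψ(x, v))`, the matrix `wedge v (ψ (x, v))` lists the components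
`Ψ⟨ẋᵢ, ẋⱼ⟩(x, v)` of `Ψ = R ∧ X`, which determine `Ψ`. -/
def wedge [CommRing R] (v a : ι → R) : Matrix ι ι R :=
  Matrix.of fun i j => v i * a j - v j * a i

theorem wedge_sub_smul_self [CommRing R] (v a : ι → R) (c : R) :
    wedge v (a - c • v) = wedge v a := by
  ext i j
  simp only [wedge, Matrix.of_apply, Pi.sub_apply, Pi.smul_apply, smul_eq_mul]
  ring

variable [Fintype ι]

theorem vecMul_wedge [CommRing R] (u v a : ι → R) :
    u ᵥ* wedge v a = (u ⬝ᵥ v) • a - (u ⬝ᵥ a) • v := by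
  ext j
  simp only [Matrix.vecMul, dotProduct, wedge, Matrix.of_apply, Pi.sub_apply, Pi.smul_apply,
    smul_eq_mul, Finset.sum_mul, ← Finset.sum_sub_distrib]
  exact Finset.sum_congr rfl fun i _ => by ring

variable [Field K]

/-- The component of `a` orthogonal to `v` for the dot product; with `v` the velocity and
`a = ψ (x, v)` it is the acceleration of the Vlasov field `W_crd` at `(x, v)`. It is meaningful only
for `v ⬝ᵥ v ≠ 0`: for isotropic `v` the division makes it equal to `a`. -/
def orthogonalPart (v a : ι → K) : ι → K :=
  a - ((v ⬝ᵥ a) / (v ⬝ᵥ v)) • v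

theorem wedge_orthogonalPart (v a : ι → K) : wedge v (orthogonalPart v a) = wedge v a :=
  wedge_sub_smul_self v a _

theorem dotProduct_orthogonalPart {v : ι → K} (hv : v ⬝ᵥ v ≠ 0) (a : ι → K) :
    v ⬝ᵥ orthogonalPart v a = 0 := by
  rw [orthogonalPart, dotProduct_sub, dotProduct_smul, smul_eq_mul, div_mul_cancel₀ _ hv, sub_self]

theorem orthogonalPart_eq_smul_vecMul_wedge {v : ι → K} (hv : v ⬝ᵥ v ≠ 0) (a : ι → K) :
    orthogonalPart v a = (v ⬝ᵥ v)⁻¹ • (v ᵥ* wedge v a) := by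
  rw [vecMul_wedge, smul_sub, inv_smul_smul₀ hv, smul_smul, orthogonalPart, div_eq_inv_mul]

theorem orthogonalPart_smul_left_eq_smul {v a b : ι → K} {l c : K} (hv : v ⬝ᵥ v ≠ 0) (hl : l ≠ 0)
    (h : wedge (l • v) b = (l * c) • wedge v a) :
    orthogonalPart (l • v) b = c • orthogonalPart v a := by
  have hnorm : (l • v) ⬝ᵥ (l • v) = l * l * (v ⬝ᵥ v) := by
    rw [smul_dotProduct, dotProduct_smul, smul_smul, smul_eq_mul]
  have hlv : (l • v) ⬝ᵥ (l • v) ≠ 0 := hnorm ▸ mul_ne_zero (mul_ne_zero hl hl) hv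
  calc orthogonalPart (l • v) b
      = ((l • v) ⬝ᵥ (l • v))⁻¹ • ((l • v) ᵥ* wedge (l • v) b) :=
        orthogonalPart_eq_smul_vecMul_wedge hlv b
    _ = ((l * l * (v ⬝ᵥ v))⁻¹ * l * (l * c)) • (v ᵥ* wedge v a) := by
        rw [hnorm, h, Matrix.smul_vecMul, Matrix.vecMul_smul, smul_smul, smul_smul]
    _ = (c * (v ⬝ᵥ v)⁻¹) • (v ᵥ* wedge v a) := by
        congr 1
        field_simp
    _ = c • orthogonalPart v a := by
        rw [orthogonalPart_eq_smul_vecMul_wedge hv, smul_smul]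

end RadialBivector

open RadialBivector in
theorem stmt_11_general {K ι B : Type*} [Field K] [Fintype ι]
    (U : Set (B × (ι → K))) (hU : ∀ p ∈ U, p.2 ⬝ᵥ p.2 ≠ 0) (k : ℕ) (ψ : B × (ι → K) → ι → K)
    (hψ : ∀ p ∈ U, ∀ l : K, l ≠ 0 → ∀ i j : ι,
      (l * p.2 i) * ψ (p.1, l • p.2) j - (l * p.2 j) * ψ (p.1, l • p.2) i =
        l ^ (k + 1) * (p.2 i * ψ p j - p.2 j * ψ p i))
    (w : B × (ι → K) → ι → K)
    (hw : w = fun p => ψ p - ((p.2 ⬝ᵥ ψ p) / (p.2 ⬝ᵥ p.2)) • p.2) :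
    ∀ p ∈ U,
      (∀ l : K, l ≠ 0 → w (p.1, l • p.2) = l ^ k • w p) ∧
      (∀ i j : ι, p.2 i * w p j - p.2 j * w p i = p.2 i * ψ p j - p.2 j * ψ p i) ∧
      p.2 ⬝ᵥ w p = 0 := by
  subst hw
  refine fun p hp => ⟨fun l hl => ?_, ?_, dotProduct_orthogonalPart (hU p hp) (ψ p)⟩
  · have hwedge : wedge (l • p.2) (ψ (p.1, l • p.2)) = (l * l ^ k) • wedge p.2 (ψ p) :=
      pow_succ' l k ▸ Matrix.ext (hψ p hp l hl)
    exact orthogonalPart_smul_left_eq_smul (hU p hp) hl hwedge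
  · exact congr_fun₂ (wedge_orthogonalPart p.2 (ψ p))

/-- Construction of the coordinate-based Vlasov field `W_crd` from a radially cubic
horizontal bivector: `w = ψ − (⟨v,ψ⟩/⟨v,v⟩)·v` is radially quadratic, represents the same
bivector `R∧X`, and is compatible with the coordinate kinematic indicator `⟨v,v⟩`. -/
theorem stmt_11 (n : ℕ) (hn : 1 ≤ n)
    (U : Set ((Fin n → ℝ) × (Fin n → ℝ)))
    (hU0 : ∀ p ∈ U, p.2 ≠ 0)
    (hUcone : ∀ p ∈ U, ∀ l : ℝ, l ≠ 0 → (p.1, l • p.2) ∈ U)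
    (ψ : (Fin n → ℝ) × (Fin n → ℝ) → (Fin n → ℝ))
    (hcubic : ∀ p ∈ U, ∀ l : ℝ, l ≠ 0 → ∀ i j : Fin n,
      (l * p.2 i) * ψ (p.1, l • p.2) j - (l * p.2 j) * ψ (p.1, l • p.2) i =
        l ^ 3 * (p.2 i * ψ p j - p.2 j * ψ p i))
    (w : (Fin n → ℝ) × (Fin n → ℝ) → (Fin n → ℝ))
    (hw : w = fun p => ψ p - ((∑ i, p.2 i * ψ p i) / (∑ i, p.2 i * p.2 i)) • p.2) :
    ∀ p ∈ U,
      (∀ l : ℝ, l ≠ 0 → w (p.1, l • p.2) = l ^ 2 • w p) ∧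
      (∀ i j : Fin n, p.2 i * w p j - p.2 j * w p i = p.2 i * ψ p j - p.2 j * ψ p i) ∧
      (∑ i, p.2 i * w p i) = 0 := by
  have hU : ∀ p ∈ U, p.2 ⬝ᵥ p.2 ≠ 0 := fun p hp => dotProduct_self_eq_zero.not.mpr (hU0 p hp)
  exact stmt_11_general U hU 2 ψ hcubic w hw
end

section
/- Fix n ≥ 1 and let U ⊆ ℝⁿ × (ℝⁿ∖{0}) satisfy (x, λv) ∈ U for all (x,v) ∈ U and λ ≠ 0, and let ψ : U → ℝⁿ. The following are equivalent: (i) there exists φ : U → ℝⁿ with φ(x,λv) = λ²·φ(x,v) for all (x,v) ∈ U and λ ≠ 0, such that vᵢ·φⱼ(x,v) − vⱼ·φᵢ(x,v) = vᵢ·ψⱼ(x,v) − vⱼ·ψᵢ(x,v) for all (x,v) ∈ U and all indices i, j; (ii) for all (x,v) ∈ U, all λ ≠ 0, and all indices i, j, (λvᵢ)·ψⱼ(x,λv) − (λvⱼ)·ψᵢ(x,λv) = λ³·(vᵢ·ψⱼ(x,v) − vⱼ·ψᵢ(x,v)). (Equivalence (i) ⟺ (iii) of the Vlasov Bivector Theorem,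 in coordinates: a horizontal bivector Ψ = R∧X admits a representation Ψ = R∧W with W a Vlasov field if and only if Ψ is radially cubic.) -/
/-!
If `φ` is homogeneous of degree `d` in `v`, then `v ∧ φ` is homogeneous of degree `d + 1`.
Conversely, `v ∧ ψ` determines `ψ` modulo multiples of `v`. Normalise `ψ` to `ψ - α_v(ψ) v`, where
`α_v` is a covector with `α_v(v) = 1`: the result depends only on `v ∧ ψ`, and it inherits
homogeneity from `v ∧ ψ` as soon as `α_{lv} = l⁻¹ α_v`. Over `ℝ` one can take
`α_v = ⟨v, ·⟩ / |v|²`; over an arbitrary field, `α_v(w) = w_k / v_k` works, where the index `k`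
of a nonzero coordinate is chosen from the support of `v` alone.
-/

/-- Homogeneity of degree `d` in the second variable, at the points of `U`: degree `2` for the
vertical part of a horizontal field defines Vlasov fields, degree `3` for a bivector is radial
cubicity. All nonzero scaling factors are allowed, not only positive ones. -/
def RadiallyHomogeneousOn (K : Type*) {X V E : Type*} [MonoidWithZero K] [SMul K V] [SMul K E]
    (U : Set (X × V)) (d : ℕ) (F : X × V → E) : Prop :=
  ∀ p ∈ U, ∀ l : K, l ≠ 0 → F (p.1, l • p.2) = l ^ d • F p

section Wedge

variable {R K ι : Type*} [CommRing R] [Field K]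

/-- The bivector `v ∧ w`, given by its array of components, as a bilinear map. -/
def wedge : (ι → R) →ₗ[R] (ι → R) →ₗ[R] (ι → ι → R) :=
  LinearMap.mk₂ R (fun v w i j => v i * w j - v j * w i)
    (fun _ _ _ => by ext; simp only [Pi.add_apply]; ring)
    (fun _ _ _ => by ext; simp only [Pi.smul_apply, smul_eq_mul]; ring)
    (fun _ _ _ => by ext; simp only [Pi.add_apply]; ring)
    (fun _ _ _ => by ext; simp only [Pi.smul_apply, smul_eq_mul]; ring)

theorem wedge_apply (v w : ι → R) (i j : ι) :
    wedge v w i j = v i * w j - v j * w i := rfl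

theorem wedge_self (v : ι → R) : wedge v v = 0 := by
  ext i j
  exact sub_eq_zero.mpr (mul_comm _ _)

theorem exists_eq_smul_of_wedge_eq_zero {v w : ι → K} (hv : v ≠ 0)
    (h : wedge v w = 0) : ∃ c : K, w = c • v := by
  obtain ⟨k, hk⟩ := Function.ne_iff.mp hv
  refine ⟨w k / v k, funext fun j => ?_⟩
  have hkj : v k * w j - v j * w k = 0 := congrFun₂ h k j
  rw [Pi.smul_apply, smul_eq_mul, div_mul_eq_mul_div, eq_div_iff hk]
  linear_combination hkj

end Wedge

section Transverse

variable {K ι : Type*} [Field K]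

open Classical in
/-- A covector `α_v` with `α_v(v) = 1`, homogeneous of degree `-1` in `v`. The coordinate used is
chosen from `Function.support v`, so it is the same for all nonzero multiples of `v`. For `v = 0`
the value is `0`. -/
noncomputable def normalizedCovector (v : ι → K) : Module.Dual K (ι → K) :=
  if h : (Function.support v).Nonempty then (v h.some)⁻¹ • LinearMap.proj h.some else 0

theorem normalizedCovector_apply_self {v : ι → K} (hv : v ≠ 0) : normalizedCovector v v = 1 := by
  have h : (Function.support v).Nonempty := Function.support_nonempty_iff.mpr hv
  rw [normalizedCovector, dif_pos h]
  exact inv_mul_cancel₀ h.some_mem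

theorem normalizedCovector_smul {l : K} (hl : l ≠ 0) (v : ι → K) :
    normalizedCovector (l • v) = l⁻¹ • normalizedCovector v := by
  have hsupp : Function.support (l • v) = Function.support v :=
    Function.support_const_smul_of_ne_zero l v hl
  by_cases h : (Function.support v).Nonempty
  · have h' : (Function.support (l • v)).Nonempty := by rwa [hsupp]
    have hsome : h'.some = h.some := by simp only [hsupp]
    rw [normalizedCovector, normalizedCovector, dif_pos h, dif_pos h', hsome, Pi.smul_apply,
      smul_eq_mul, mul_inv, mul_smul]
  · have h' : ¬(Function.support (l • v)).Nonempty := by rwa [hsupp]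
    rw [normalizedCovector, normalizedCovector, dif_neg h, dif_neg h', smul_zero]

/-- The representative of `w` modulo multiples of `v` that is killed by `normalizedCovector v`. -/
noncomputable def transversePart (v w : ι → K) : ι → K :=
  w - normalizedCovector v w • v

theorem wedge_transversePart (v w : ι → K) : wedge v (transversePart v w) = wedge v w := by
  rw [transversePart, map_sub, map_smul, wedge_self, smul_zero, sub_zero]

theorem transversePart_eq_of_wedge_eq {v w w' : ι → K} (hv : v ≠ 0)
    (h : wedge v w = wedge v w') : transversePart v w = transversePart v w' := by
  obtain ⟨c, hc⟩ : ∃ c : K, w - w' = c • v :=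
    exists_eq_smul_of_wedge_eq_zero hv (by rw [map_sub, h, sub_self])
  obtain rfl : w = w' + c • v := eq_add_of_sub_eq' hc
  rw [transversePart, transversePart, map_add, map_smul, normalizedCovector_apply_self hv,
    smul_eq_mul, mul_one, add_smul, add_sub_add_right_eq_sub]

theorem transversePart_smul_smul {l : K} (hl : l ≠ 0) (c : K) (v w : ι → K) :
    transversePart (l • v) (c • w) = c • transversePart v w := by
  have hcoeff : l⁻¹ * (c * normalizedCovector v w) * l = c * normalizedCovector v w := by
    field_simp
  rw [transversePart, transversePart, normalizedCovector_smul hl, LinearMap.smul_apply, map_smul,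
    smul_eq_mul, smul_eq_mul, smul_smul, hcoeff, mul_smul, smul_sub]

end Transverse

section RadialBivector

variable {X K ι : Type*} [Field K] {U : Set (X × (ι → K))}

theorem RadiallyHomogeneousOn.wedge_snd {d : ℕ} {φ : X × (ι → K) → ι → K}
    (hφ : RadiallyHomogeneousOn K U d φ) :
    RadiallyHomogeneousOn K U (d + 1) fun p => wedge p.2 (φ p) := by
  intro p hp l hl
  simp only [hφ p hp l hl, map_smul, LinearMap.smul_apply, smul_smul, pow_succ]

theorem RadiallyHomogeneousOn.transversePart_of_wedge {d : ℕ} {ψ : X × (ι → K) → ι → K}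
    (hU0 : ∀ p ∈ U, p.2 ≠ 0)
    (hψ : RadiallyHomogeneousOn K U (d + 1) fun p => wedge p.2 (ψ p)) :
    RadiallyHomogeneousOn K U d fun p => transversePart p.2 (ψ p) := by
  intro p hp l hl
  have hwedge : wedge (l • p.2) (ψ (p.1, l • p.2)) = wedge (l • p.2) (l ^ d • ψ p) :=
    calc wedge (l • p.2) (ψ (p.1, l • p.2))
      _ = l ^ (d + 1) • wedge p.2 (ψ p) := hψ p hp l hl
      _ = wedge (l • p.2) (l ^ d • ψ p) := by
        rw [map_smul, map_smul, LinearMap.smul_apply, smul_smul, pow_succ]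
  calc transversePart (l • p.2) (ψ (p.1, l • p.2))
    _ = transversePart (l • p.2) (l ^ d • ψ p) :=
      transversePart_eq_of_wedge_eq (smul_ne_zero hl (hU0 p hp)) hwedge
    _ = l ^ d • transversePart p.2 (ψ p) := transversePart_smul_smul hl _ _ _

theorem stmt_12_general (d : ℕ) (hU0 : ∀ p ∈ U, p.2 ≠ 0)
    (hUcone : ∀ p ∈ U, ∀ l : K, l ≠ 0 → (p.1, l • p.2) ∈ U) (ψ : X × (ι → K) → ι → K) :
    (∃ φ : X × (ι → K) → ι → K,
        RadiallyHomogeneousOn K U d φ ∧ ∀ p ∈ U, wedge p.2 (φ p) = wedge p.2 (ψ p)) ↔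
      RadiallyHomogeneousOn K U (d + 1) fun p => wedge p.2 (ψ p) := by
  constructor
  · rintro ⟨φ, hφ, hφψ⟩ p hp l hl
    simpa only [hφψ p hp, hφψ _ (hUcone p hp l hl)] using hφ.wedge_snd p hp l hl
  · intro hψ
    exact ⟨_, hψ.transversePart_of_wedge hU0, fun p _ => wedge_transversePart p.2 (ψ p)⟩

end RadialBivector

/-- Vlasov Bivector Theorem, (i) ⟺ (iii) in coordinates: a horizontal bivector `R∧X`
(with vertical part `ψ`) admits a representation `R∧W` with `W` a Vlasov field (radially
quadratic vertical part `φ`) iff it is radially cubic. -/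
theorem stmt_12 (n : ℕ) (hn : 1 ≤ n)
    (U : Set ((Fin n → ℝ) × (Fin n → ℝ)))
    (hU0 : ∀ p ∈ U, p.2 ≠ 0)
    (hUcone : ∀ p ∈ U, ∀ l : ℝ, l ≠ 0 → (p.1, l • p.2) ∈ U)
    (ψ : (Fin n → ℝ) × (Fin n → ℝ) → (Fin n → ℝ)) :
    (∃ φ : (Fin n → ℝ) × (Fin n → ℝ) → (Fin n → ℝ),
        (∀ p ∈ U, ∀ l : ℝ, l ≠ 0 → φ (p.1, l • p.2) = l ^ 2 • φ p) ∧
        (∀ p ∈ U, ∀ i j : Fin n,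
          p.2 i * φ p j - p.2 j * φ p i = p.2 i * ψ p j - p.2 j * ψ p i)) ↔
    (∀ p ∈ U, ∀ l : ℝ, l ≠ 0 → ∀ i j : Fin n,
        (l * p.2 i) * ψ (p.1, l • p.2) j - (l * p.2 j) * ψ (p.1, l • p.2) i =
          l ^ 3 * (p.2 i * ψ p j - p.2 j * ψ p i)) := by
  simpa only [RadiallyHomogeneousOn, funext_iff, wedge_apply, Pi.smul_apply, smul_eq_mul] using
    stmt_12_general 2 hU0 hUcone ψ
end

section
/- Let V be a real vector space of finite dimension m with m ≥ 2, let Ω be a nonzero alternating m-linear form on V, let w ∈ V be nonzero, and let θ be an alternating (m−1)-linear form on V such that the interior product i_wθ (the (m−2)-form obtained by inserting w into the first argument of θ) is zero. Then there exists a unique scalar c ∈ ℝ such that θ = c · (i_wΩ), where i_wΩ is the (m−1)-form obtained by inserting w into the first argument of Ω. (Pointwise form of the lemma: a particle density form annihilated by the Vlasov field is a unique scalar multiple of the contraction of the volume form by the Vlasov field.) -/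
/-!
Choose a functional `l` with `l w = 1`. By the Leibniz rule, `i_w (l ∧ θ) = θ - l ∧ i_w θ`, so
every form annihilated by `i_w` is itself of the form `i_w Θ`. Applied to `θ` of degree `m - 1`,
this gives a top-degree form `Θ`, which is a multiple of `Ω`. Applied to `Ω`, it shows that
`i_w Ω ≠ 0`: otherwise `Ω` would be the contraction of a form of degree `m + 1`, hence zero.
-/

open AlternatingMap Module

section Contraction

variable {R M N : Type*} [CommRing R] [AddCommGroup M] [Module R M]
  [AddCommGroup N] [Module R N] {n : ℕ}

theorem curryLeft_alternatizeUncurryFin (f : M →ₗ[R] M [⋀^Fin (n + 1)]→ₗ[R] N) (w : M) :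
    (alternatizeUncurryFin f).curryLeft w =
      f w - alternatizeUncurryFin (curryLeftLinearMap.flip w ∘ₗ f) := by
  ext v
  have removeNth_succ_vecCons (i : Fin (n + 1)) :
      i.succ.removeNth (Matrix.vecCons w v) = Matrix.vecCons w (i.removeNth v) := by
    ext j
    cases j using Fin.cases <;> simp [Fin.removeNth]
  simp [alternatizeUncurryFin_apply, Fin.sum_univ_succ (n := n + 1), removeNth_succ_vecCons,
    pow_succ, sub_eq_add_neg]

theorem curryLeft_alternatizeUncurryFin_smulRight (l : Dual R M) {w : M} (hw : l w = 1)
    {f : M [⋀^Fin (n + 1)]→ₗ[R] N} (hf : f.curryLeft w = 0) :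
    (alternatizeUncurryFin (l.smulRight f)).curryLeft w = f := by
  have contraction_eq_zero : curryLeftLinearMap.flip w ∘ₗ l.smulRight f = 0 := by
    ext x : 1
    simp [hf]
  rw [curryLeft_alternatizeUncurryFin, contraction_eq_zero]
  ext v
  simp [alternatizeUncurryFin_apply, hw]

theorem exact_curryLeft (l : Dual R M) {w : M} (hw : l w = 1) :
    Function.Exact (fun f : M [⋀^Fin (n + 2)]→ₗ[R] N ↦ f.curryLeft w)
      (fun f : M [⋀^Fin (n + 1)]→ₗ[R] N ↦ f.curryLeft w) := by
  refine fun f ↦ ⟨fun hf ↦ ⟨_, curryLeft_alternatizeUncurryFin_smulRight l hw hf⟩, ?_⟩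
  rintro ⟨g, rfl⟩
  exact g.curryLeft_same w

end Contraction

theorem alternatingMap_eq_zero_of_finrank_lt_card {R M N ι : Type*} [CommRing R] [IsDomain R]
    [AddCommGroup M] [Module R M] [Module.Finite R M] [AddCommGroup N] [Module R N]
    [IsTorsionFree R N] [Fintype ι] (h : finrank R M < Fintype.card ι) (f : M [⋀^ι]→ₗ[R] N) :
    f = 0 := by
  ext v
  exact f.map_linearDependent v fun hv ↦ h.not_ge hv.fintype_card_le_finrank

section VectorSpace

variable {K V : Type*} [Field K] [AddCommGroup V] [Module K V]

theorem exists_eq_smul_of_basis {ι : Type*} [Finite ι] (b : Basis ι K V)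
    {Ω : V [⋀^ι]→ₗ[K] K} (hΩ : Ω ≠ 0) (f : V [⋀^ι]→ₗ[K] K) : ∃ c : K, f = c • Ω := by
  have hΩb : Ω b ≠ 0 := (Ω.map_basis_ne_zero_iff b).mpr hΩ
  have vanishes_on_basis : (f - (f b / Ω b) • Ω) b = 0 := by simp [hΩb]
  exact ⟨f b / Ω b, sub_eq_zero.mp ((map_basis_eq_zero_iff b _).mp vanishes_on_basis)⟩

theorem curryLeft_ne_zero_of_finrank_eq {n : ℕ} (hdim : finrank K V = n + 1)
    {Ω : V [⋀^Fin (n + 1)]→ₗ[K] K} (hΩ : Ω ≠ 0) {w : V} (hw : w ≠ 0) :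
    Ω.curryLeft w ≠ 0 := by
  intro hzero
  have : FiniteDimensional K V := .of_finrank_eq_succ hdim
  obtain ⟨l, hl⟩ := Projective.exists_dual_eq_one K hw
  obtain ⟨Ψ, rfl⟩ := (exact_curryLeft l hl Ω).mp hzero
  have hΨ : Ψ = 0 := alternatingMap_eq_zero_of_finrank_lt_card (by simp [hdim]) Ψ
  simp [hΨ] at hΩ

theorem stmt_15_general (k : ℕ) (hdim : finrank K V = k + 2)
    (Ω : V [⋀^Fin (k + 2)]→ₗ[K] K) (hΩ : Ω ≠ 0) (w : V) (hw : w ≠ 0)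
    (θ : V [⋀^Fin (k + 1)]→ₗ[K] K) (hθ : θ.curryLeft w = 0) :
    ∃! c : K, θ = c • Ω.curryLeft w := by
  have : FiniteDimensional K V := .of_finrank_eq_succ hdim
  obtain ⟨l, hl⟩ := Projective.exists_dual_eq_one K hw
  obtain ⟨Θ, rfl⟩ := (exact_curryLeft l hl θ).mp hθ
  obtain ⟨c, rfl⟩ := exists_eq_smul_of_basis (finBasisOfFinrankEq K V hdim) hΩ Θ
  refine ⟨c, rfl, fun d hd ↦ ?_⟩
  exact (smul_left_injective K (curryLeft_ne_zero_of_finrank_eq hdim hΩ hw) hd).symm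

end VectorSpace

/-- Pointwise form of the particle density lemma: in an `m`-dimensional real vector
space (`m = k+2 ≥ 2`) with a nonzero volume form `Ω` and a nonzero vector `w`, any
alternating `(m−1)`-form `θ` with `i_w θ = 0` is a unique scalar multiple of `i_w Ω`. -/
theorem stmt_15 (k : ℕ) (V : Type*) [AddCommGroup V] [Module ℝ V]
    [FiniteDimensional ℝ V] (hdim : Module.finrank ℝ V = k + 2)
    (Ω : V [⋀^Fin (k + 2)]→ₗ[ℝ] ℝ) (hΩ : Ω ≠ 0)
    (w : V) (hw : w ≠ 0)
    (θ : V [⋀^Fin (k + 1)]→ₗ[ℝ] ℝ)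
    (hθ : θ.curryLeft w = 0) :
    ∃! c : ℝ, θ = c • Ω.curryLeft w :=
  stmt_15_general k hdim Ω hΩ w hw θ hθ
end
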